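/- For every fixed ε > 0 there exists a constant β₀ = β₀(ε) > 0 such that for every 0 < β ≤ β₀ and every edge-probability function p(n) ≥ ln n / n the following holds with high probability for G sampled from G(n,p), with t = np/100, G₁ = G[V ∖ D_t(G)] the induced subgraph on the vertices of degree at least t, and n₁ = |V ∖ D_t(G)|: for every spanning subgraph H₁ ⊆ G₁ satisfying d_{H₁}(v) ≤ (1/3 − ε)·d_G(v) for every vertex v of G₁, the graph G₁ − H₁ is (n₁, np, β)-quasi-random. -/

import Mathlib

open Filter Finset SimpleGraph
open scoped Classical

/-- The probability weight of a particular graph `G` on `[n]` under `G(n,p)`. -/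
noncomputable def gnpWeight (n : ℕ) (p : ℝ) (G : SimpleGraph (Fin n)) : ℝ :=
  p ^ G.edgeFinset.card * (1 - p) ^ (n.choose 2 - G.edgeFinset.card)

/-- The probability that a random graph `G ~ G(n,p)` satisfies the predicate `A`. -/
noncomputable def gnpProb (n : ℕ) (p : ℝ) (A : SimpleGraph (Fin n) → Prop) : ℝ :=
  ∑ G : SimpleGraph (Fin n), if A G then gnpWeight n p G else 0

/-- A sequence of graph properties holds with high probability in `G(n, p n)`. -/
def WHP (p : ℕ → ℝ) (A : ∀ n : ℕ, SimpleGraph (Fin n) → Prop) : Prop :=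
  Tendsto (fun n => gnpProb n (p n) (A n)) atTop (nhds 1)

/-- Number of edges of a graph. -/
noncomputable def edgeCount {V : Type*} [Fintype V] (G : SimpleGraph V) : ℕ :=
  G.edgeFinset.card

/-- Number of edges with both endpoints in `U`. -/
noncomputable def eIn {V : Type*} [Fintype V] (G : SimpleGraph V) (U : Finset V) : ℕ :=
  (G.edgeFinset.filter (fun e => ∀ v ∈ e, v ∈ U)).card

/-- Number of edges with one endpoint in `U` and the other in `Z` (for disjoint `U`, `Z`). -/
noncomputable def eBetween {V : Type*} [Fintype V] (G : SimpleGraph V) (U Z : Finset V) : ℕ :=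
  ((U ×ˢ Z).filter (fun q => G.Adj q.1 q.2)).card

/-- External neighbourhood of a vertex set. -/
noncomputable def extNbhd {V : Type*} [Fintype V] (G : SimpleGraph V) (U : Finset V) : Finset V :=
  Finset.univ.filter (fun v => v ∉ U ∧ ∃ u ∈ U, G.Adj u v)

/-- `G` is an `(R, f)`-expander: every set `U` with `|U| ≤ R` satisfies `|N(U)| ≥ f(|U|)·|U|`. -/
def IsExpander {V : Type*} [Fintype V] (G : SimpleGraph V) (R : ℝ) (f : ℕ → ℝ) : Prop :=
  ∀ U : Finset V, U.Nonempty → (U.card : ℝ) ≤ R →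
    f U.card * U.card ≤ ((extNbhd G U).card : ℝ)

/-- The expansion function `f_β` on `{1, …, ⌊β n₁⌋}`. -/
noncomputable def fBeta (β : ℝ) (n1 : ℕ) (t : ℕ) : ℝ :=
  if t = Nat.floor (β * n1) then 2 * (1 + 39 * β) / (3 * β)
  else if (t : ℝ) < (n1 : ℝ) ^ (0.1 : ℝ) then Real.log n1 ^ (0.8 : ℝ)
  else 11

/-- `G₁` is `(n₁, d, β)`-quasi-random. -/
def QuasiRandom {V : Type*} [Fintype V] (G1 : SimpleGraph V) (n1 : ℕ) (d β : ℝ) : Prop :=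
  (∀ v : V, d / 150 ≤ (G1.degree v : ℝ)) ∧
  (∀ U : Finset V, (U.card : ℝ) < (n1 : ℝ) ^ (0.11 : ℝ) * Real.log n1 →
    (eIn G1 U : ℝ) ≤ d ^ (0.13 : ℝ) * U.card) ∧
  (∀ U : Finset V, (U.card : ℝ) < 12 * β * n1 →
    (eIn G1 U : ℝ) ≤ 50 * β * d * U.card) ∧
  (∀ U Z : Finset V, Disjoint U Z → U.card = Nat.floor (β * n1) →
    Z.card = Nat.floor ((1 / 3 - 27 * β) * n1) →
    (n1 : ℝ) * Real.log (Real.log n1) ≤ (eBetween G1 U Z : ℝ))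

/-- Longest path length in `G`. -/
noncomputable def longestPath {V : Type*} [Fintype V] (G : SimpleGraph V) : ℕ :=
  sSup {l : ℕ | ∃ (u v : V) (q : G.Walk u v), q.IsPath ∧ q.length = l}

/-- `{u, v}` is a booster with respect to `Γ`. -/
def IsBooster {V : Type*} [Fintype V] (Γ : SimpleGraph V) (u v : V) : Prop :=
  u ≠ v ∧ ¬ Γ.Adj u v ∧
    ((Γ ⊔ fromEdgeSet {s(u, v)}).IsHamiltonian ∨
      longestPath Γ < longestPath (Γ ⊔ fromEdgeSet {s(u, v)}))

/-- The booster set `B_Γ(v)`. -/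
noncomputable def boosterSet {V : Type*} [Fintype V] (Γ : SimpleGraph V) (v : V) : Finset V :=
  Finset.univ.filter (fun w => IsBooster Γ v w)

/-- Membership in the family `𝓛(n, β)` with witnessing partition `V = V₁ ∪ D`. -/
def InFamilyL (n : ℕ) (β : ℝ) (G : SimpleGraph (Fin n)) (V1 D : Finset (Fin n)) : Prop :=
  Disjoint V1 D ∧ V1 ∪ D = Finset.univ ∧
  ((D.card : ℝ) ≤ (n : ℝ) ^ (0.09 : ℝ)) ∧
  (∀ u ∈ D, 2 ≤ (G.neighborFinset u ∩ V1).card) ∧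
  (∀ u ∈ D, ∀ v ∈ D, ∀ q : G.Walk u v, q.IsPath → 0 < q.length →
    2 * Real.log n / (3 * Real.log (Real.log n)) < (q.length : ℝ)) ∧
  (∀ u ∈ D, ∀ q : G.Walk u u, q.IsCycle →
    2 * Real.log n / (3 * Real.log (Real.log n)) < (q.length : ℝ)) ∧
  IsExpander (G.induce (V1 : Set (Fin n))) (β * V1.card) (fBeta β V1.card)

/-- The set `D_t(G)` of vertices of degree less than `t`. -/
noncomputable def lowDegSet (n : ℕ) (t : ℝ) (G : SimpleGraph (Fin n)) : Finset (Fin n) :=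
  Finset.univ.filter (fun v => (G.degree v : ℝ) < t)

/-! ### Probability basics -/

/-- All potential edges. -/
noncomputable def allE (n : ℕ) : Finset (Sym2 (Fin n)) := (⊤ : SimpleGraph (Fin n)).edgeFinset

lemma allE_card (n : ℕ) : (allE n).card = n.choose 2 := by
  unfold allE
  have := SimpleGraph.card_edgeFinset_top_eq_card_choose_two (V := Fin n)
  rw [Fintype.card_fin] at this
  rw [← this]

lemma edge_sub_allE {n : ℕ} (G : SimpleGraph (Fin n)) : G.edgeFinset ⊆ allE n := by
  unfold allE
  intro e he
  rw [SimpleGraph.mem_edgeFinset] at he ⊢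
  exact SimpleGraph.edgeSet_mono le_top he

lemma mem_allE {n : ℕ} {e : Sym2 (Fin n)} : e ∈ allE n ↔ ¬ e.IsDiag := by
  unfold allE
  rw [SimpleGraph.mem_edgeFinset]
  simp

lemma mem_eF {n : ℕ} (G : SimpleGraph (Fin n)) (e : Sym2 (Fin n)) :
    e ∈ G.edgeFinset ↔ e ∈ G.edgeSet := SimpleGraph.mem_edgeFinset

lemma gnp_prod (n : ℕ) (p : ℝ) (f g : Sym2 (Fin n) → ℝ) :
    ∑ G : SimpleGraph (Fin n), gnpWeight n p G *
      ((∏ e ∈ G.edgeFinset, f e) * ∏ e ∈ allE n \ G.edgeFinset, g e)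
      = ∏ e ∈ allE n, (p * f e + (1 - p) * g e) := by
  rw [Finset.prod_add]
  refine Finset.sum_bij' (fun G _ => G.edgeFinset)
    (fun s _ => SimpleGraph.fromEdgeSet (s : Set (Sym2 (Fin n)))) ?_ ?_ ?_ ?_ ?_
  · intro G _
    exact Finset.mem_powerset.2 (edge_sub_allE G)
  · intro s _
    exact Finset.mem_univ _
  · intro G _
    simp
  · intro s hs
    rw [Finset.mem_powerset] at hs
    ext e
    refine (mem_eF _ e).trans ?_
    rw [SimpleGraph.edgeSet_fromEdgeSet]
    simp only [Set.mem_sdiff, Finset.mem_coe]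
    constructor
    · exact fun h => h.1
    · intro h
      exact ⟨h, by simpa using mem_allE.1 (hs h)⟩
  · intro G _
    simp only [Finset.prod_mul_distrib, Finset.prod_const, gnpWeight]
    rw [Finset.card_sdiff_of_subset (edge_sub_allE G), allE_card]
    ring

lemma gnpWeight_nonneg {n : ℕ} {p : ℝ} (h0 : 0 ≤ p) (h1 : p ≤ 1) (G : SimpleGraph (Fin n)) :
    0 ≤ gnpWeight n p G :=
  mul_nonneg (pow_nonneg h0 _) (pow_nonneg (by linarith) _)

lemma gnp_total (n : ℕ) (p : ℝ) : ∑ G : SimpleGraph (Fin n), gnpWeight n p G = 1 := by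
  have := gnp_prod n p (fun _ => 1) (fun _ => 1)
  simpa using this

lemma gnpProb_markov {n : ℕ} {p : ℝ} (h0 : 0 ≤ p) (h1 : p ≤ 1)
    (A : SimpleGraph (Fin n) → Prop) (F : SimpleGraph (Fin n) → ℝ)
    (hF : ∀ G, 0 ≤ F G) (hA : ∀ G, A G → 1 ≤ F G) :
    gnpProb n p A ≤ ∑ G, gnpWeight n p G * F G := by
  unfold gnpProb
  refine Finset.sum_le_sum fun G _ => ?_
  have hw := gnpWeight_nonneg h0 h1 G
  split_ifs with h
  · nlinarith [hA G h]
  · exact mul_nonneg hw (hF G)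

lemma gnpProb_nonneg {n : ℕ} {p : ℝ} (h0 : 0 ≤ p) (h1 : p ≤ 1)
    (A : SimpleGraph (Fin n) → Prop) : 0 ≤ gnpProb n p A := by
  unfold gnpProb
  refine Finset.sum_nonneg fun G _ => ?_
  have hw := gnpWeight_nonneg h0 h1 G
  split_ifs <;> simp [hw]

lemma gnpProb_le_one {n : ℕ} {p : ℝ} (h0 : 0 ≤ p) (h1 : p ≤ 1)
    (A : SimpleGraph (Fin n) → Prop) : gnpProb n p A ≤ 1 := by
  have := gnpProb_markov h0 h1 A (fun _ => 1) (by simp) (by simp)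
  simpa [gnp_total] using this

lemma gnpProb_mono {n : ℕ} {p : ℝ} (h0 : 0 ≤ p) (h1 : p ≤ 1)
    {A B : SimpleGraph (Fin n) → Prop} (h : ∀ G, A G → B G) :
    gnpProb n p A ≤ gnpProb n p B := by
  unfold gnpProb
  refine Finset.sum_le_sum fun G _ => ?_
  have hw := gnpWeight_nonneg h0 h1 G
  by_cases hA : A G
  · simp [hA, h G hA]
  · simp only [hA, if_false]
    split_ifs <;> simp [hw]

lemma gnpProb_false {n : ℕ} {p : ℝ} {A : SimpleGraph (Fin n) → Prop} (h : ∀ G, ¬ A G) :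
    gnpProb n p A = 0 := by
  unfold gnpProb
  exact Finset.sum_eq_zero fun G _ => by simp [h G]

lemma gnpProb_not {n : ℕ} {p : ℝ} (A : SimpleGraph (Fin n) → Prop) :
    gnpProb n p A = 1 - gnpProb n p (fun G => ¬ A G) := by
  rw [eq_sub_iff_add_eq]
  unfold gnpProb
  rw [← Finset.sum_add_distrib, ← gnp_total n p]
  refine Finset.sum_congr rfl fun G _ => ?_
  by_cases h : A G <;> simp [h]

lemma gnpProb_or {n : ℕ} {p : ℝ} (h0 : 0 ≤ p) (h1 : p ≤ 1)
    (A B : SimpleGraph (Fin n) → Prop) :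
    gnpProb n p (fun G => A G ∨ B G) ≤ gnpProb n p A + gnpProb n p B := by
  unfold gnpProb
  rw [← Finset.sum_add_distrib]
  refine Finset.sum_le_sum fun G _ => ?_
  have hw := gnpWeight_nonneg h0 h1 G
  by_cases hA : A G <;> by_cases hB : B G <;> simp [hA, hB, hw]

lemma gnpProb_union {n : ℕ} {p : ℝ} (h0 : 0 ≤ p) (h1 : p ≤ 1) {ι : Type*} [Fintype ι]
    (A : ι → SimpleGraph (Fin n) → Prop) :
    gnpProb n p (fun G => ∃ i, A i G) ≤ ∑ i, gnpProb n p (A i) := by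
  unfold gnpProb
  rw [Finset.sum_comm]
  refine Finset.sum_le_sum fun G _ => ?_
  have hw := gnpWeight_nonneg h0 h1 G
  have hnn : ∀ i ∈ (Finset.univ : Finset ι), 0 ≤ (if A i G then gnpWeight n p G else 0) := by
    intro i _
    split_ifs <;> simp [hw]
  split_ifs with h
  · obtain ⟨i, hi⟩ := h
    have := Finset.single_le_sum hnn (Finset.mem_univ i)
    simpa [hi] using this
  · exact Finset.sum_nonneg hnn

/-- General Chernoff bound with forced edges. -/
lemma gnp_chernoff {n : ℕ} {p : ℝ} (h0 : 0 ≤ p) (h1 : p ≤ 1) (S T : Finset (Sym2 (Fin n)))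
    (hS : S ⊆ allE n) (hT : T ⊆ allE n) (hST : Disjoint S T) (s m : ℝ) :
    gnpProb n p (fun G => T ⊆ G.edgeFinset ∧ s * m ≤ s * ((G.edgeFinset ∩ S).card : ℝ)) ≤
      p ^ T.card * Real.exp (p * (Real.exp s - 1) * S.card - s * m) := by
  set f : Sym2 (Fin n) → ℝ := fun e => if e ∈ S then Real.exp s else 1 with hf
  set g : Sym2 (Fin n) → ℝ := fun e => if e ∈ T then 0 else 1 with hg
  have hfprod : ∀ G : SimpleGraph (Fin n), ∏ e ∈ G.edgeFinset, f e =
      Real.exp (s * ((G.edgeFinset ∩ S).card : ℝ)) := by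
    intro G
    rw [hf, Finset.prod_ite_mem, Finset.prod_const, ← Real.exp_nat_mul]
    ring_nf
  have hgnn : ∀ e, 0 ≤ g e := by
    intro e
    simp only [hg]
    split_ifs <;> norm_num
  have key := gnpProb_markov h0 h1
    (fun G => T ⊆ G.edgeFinset ∧ s * m ≤ s * ((G.edgeFinset ∩ S).card : ℝ))
    (fun G => ((∏ e ∈ G.edgeFinset, f e) * ∏ e ∈ allE n \ G.edgeFinset, g e)
      * Real.exp (-(s * m))) ?_ ?_
  · refine key.trans ?_
    have : ∑ G : SimpleGraph (Fin n), gnpWeight n p G *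
        (((∏ e ∈ G.edgeFinset, f e) * ∏ e ∈ allE n \ G.edgeFinset, g e) * Real.exp (-(s * m)))
        = (∏ e ∈ allE n, (p * f e + (1 - p) * g e)) * Real.exp (-(s * m)) := by
      rw [← gnp_prod, Finset.sum_mul]
      refine Finset.sum_congr rfl fun G _ => by ring
    rw [this, sub_eq_add_neg (p * (Real.exp s - 1) * _), Real.exp_add, ← mul_assoc]
    refine mul_le_mul_of_nonneg_right ?_ (Real.exp_pos _).le
    have hle : ∏ e ∈ allE n, (p * f e + (1 - p) * g e) ≤
        ∏ e ∈ allE n, ((if e ∈ T then p else 1) *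
          (if e ∈ S then Real.exp (p * (Real.exp s - 1)) else 1)) := by
      refine Finset.prod_le_prod ?_ ?_
      · intro e _
        have : 0 ≤ f e := by
          simp only [hf]
          split_ifs
          · exact (Real.exp_pos _).le
          · norm_num
        have h2 := hgnn e
        have h3 : 0 ≤ 1 - p := by linarith
        positivity
      · intro e _
        simp only [hf, hg]
        by_cases hs : e ∈ S
        · have ht : e ∉ T := Finset.disjoint_left.1 hST hs
          simp only [hs, ht, if_true, if_false]
          have := Real.add_one_le_exp (p * (Real.exp s - 1))
          linarith
        · by_cases ht : e ∈ T <;> simp [hs, ht]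
    refine hle.trans (le_of_eq ?_)
    rw [Finset.prod_mul_distrib, Finset.prod_ite_mem, Finset.prod_ite_mem, Finset.prod_const,
      Finset.prod_const, Finset.inter_eq_right.2 hT, Finset.inter_eq_right.2 hS,
      ← Real.exp_nat_mul]
    ring_nf
  · intro G
    refine mul_nonneg (mul_nonneg ?_ (Finset.prod_nonneg fun e _ => hgnn e)) (Real.exp_pos _).le
    rw [hfprod]
    exact (Real.exp_pos _).le
  · rintro G ⟨hTG, hm⟩
    have : ∏ e ∈ allE n \ G.edgeFinset, g e = 1 := by
      refine Finset.prod_eq_one fun e he => ?_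
      have : e ∉ T := fun h => (Finset.mem_sdiff.1 he).2 (hTG h)
      simp [hg, this]
    simp only [this, hfprod, mul_one]
    rw [← Real.exp_add]
    exact Real.one_le_exp (by linarith)

lemma gnp_chernoff' {n : ℕ} {p : ℝ} (h0 : 0 ≤ p) (h1 : p ≤ 1) (S : Finset (Sym2 (Fin n)))
    (hS : S ⊆ allE n) (s m : ℝ) :
    gnpProb n p (fun G => s * m ≤ s * ((G.edgeFinset ∩ S).card : ℝ)) ≤
      Real.exp (p * (Real.exp s - 1) * S.card - s * m) := by
  have := gnp_chernoff h0 h1 S ∅ hS (by simp) (by simp) s m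
  simpa using this

/-! ### Edge sets -/

noncomputable def inE {n : ℕ} (U : Finset (Fin n)) : Finset (Sym2 (Fin n)) :=
  (allE n).filter (fun e => ∀ v ∈ e, v ∈ U)

noncomputable def betE {n : ℕ} (U W : Finset (Fin n)) : Finset (Sym2 (Fin n)) :=
  (U ×ˢ W).image (fun q => s(q.1, q.2))

lemma inE_sub {n : ℕ} (U : Finset (Fin n)) : inE U ⊆ allE n := Finset.filter_subset _ _

lemma inE_card {n : ℕ} (U : Finset (Fin n)) : 2 * ((inE U).card : ℝ) ≤ (U.card : ℝ) ^ 2 := by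
  have h : inE U ⊆ U.offDiag.image Sym2.mk.uncurry := by
    intro e he
    rw [inE, Finset.mem_filter, mem_allE] at he
    obtain ⟨h1, h2⟩ := he
    induction e using Sym2.ind with
    | _ a b =>
      rw [Finset.mem_image]
      refine ⟨(a, b), ?_, rfl⟩
      rw [Finset.mem_offDiag]
      exact ⟨h2 a (by simp), h2 b (by simp), by simpa using h1⟩
  have h2 := Finset.card_le_card h
  have h3 : (U.offDiag.image Sym2.mk.uncurry).card = U.card.choose 2 := Sym2.card_image_offDiag U
  rw [h3] at h2
  have h4 : ((inE U).card : ℝ) ≤ (U.card.choose 2 : ℕ) := by exact_mod_cast h2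
  rw [Nat.cast_choose_two] at h4
  have : (0 : ℝ) ≤ U.card := Nat.cast_nonneg _
  nlinarith

lemma eIn_eq {n : ℕ} (G : SimpleGraph (Fin n)) (U : Finset (Fin n)) :
    eIn G U = (G.edgeFinset ∩ inE U).card := by
  unfold eIn inE
  congr 1
  ext e
  simp only [Finset.mem_filter, Finset.mem_inter]
  constructor
  · rintro ⟨h1, h2⟩
    exact ⟨h1, edge_sub_allE G h1, h2⟩
  · rintro ⟨h1, _, h2⟩
    exact ⟨h1, h2⟩

lemma betE_inj {n : ℕ} {U W : Finset (Fin n)} (h : Disjoint U W) :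
    Set.InjOn (fun q : Fin n × Fin n => s(q.1, q.2)) (U ×ˢ W : Finset (Fin n × Fin n)) := by
  rintro ⟨a, b⟩ h1 ⟨c, d⟩ h2 h3
  simp only [Finset.coe_product, Set.mem_prod, Finset.mem_coe] at h1 h2
  simp only [Sym2.eq_iff] at h3
  rcases h3 with ⟨rfl, rfl⟩ | ⟨rfl, rfl⟩
  · rfl
  · exact absurd h2.2 (Finset.disjoint_left.1 h h1.1)

lemma betE_card {n : ℕ} {U W : Finset (Fin n)} (h : Disjoint U W) :
    (betE U W).card = U.card * W.card := by
  unfold betE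
  rw [Finset.card_image_of_injOn (betE_inj h), Finset.card_product]

lemma betE_sub {n : ℕ} {U W : Finset (Fin n)} (h : Disjoint U W) : betE U W ⊆ allE n := by
  intro e he
  rw [betE, Finset.mem_image] at he
  obtain ⟨⟨a, b⟩, h1, rfl⟩ := he
  rw [mem_allE]
  rw [Finset.mem_product] at h1
  simp only [Sym2.mk_isDiag_iff]
  rintro rfl
  exact Finset.disjoint_left.1 h h1.1 h1.2

lemma eBetween_eq {n : ℕ} (G : SimpleGraph (Fin n)) {U W : Finset (Fin n)} (h : Disjoint U W) :
    eBetween G U W = (G.edgeFinset ∩ betE U W).card := by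
  have : G.edgeFinset ∩ betE U W =
      ((U ×ˢ W).filter (fun q => G.Adj q.1 q.2)).image (fun q => s(q.1, q.2)) := by
    ext e
    simp only [Finset.mem_inter, betE, Finset.mem_image, Finset.mem_filter]
    constructor
    · rintro ⟨h1, q, hq, rfl⟩
      exact ⟨q, ⟨hq, by simpa using h1⟩, rfl⟩
    · rintro ⟨q, ⟨hq, ha⟩, rfl⟩
      exact ⟨by simpa using ha, q, hq, rfl⟩
  rw [this, Finset.card_image_of_injOn]
  · rfl
  · exact (betE_inj h).mono (by exact_mod_cast Finset.filter_subset _ _)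

/-! ### Tail bounds -/

lemma tail_in {n : ℕ} {p : ℝ} (h0 : 0 < p) (h1 : p ≤ 1) (U : Finset (Fin n)) (hU : U.Nonempty)
    (k : ℝ) (hk : 0 < k) (hku : U.card * p ≤ 2 * k) :
    gnpProb n p (fun G => k * U.card < (eIn G U : ℝ)) ≤
      Real.exp (-(k * U.card) * (Real.log (2 * k / (U.card * p)) - 1)) := by
  have hu : (0 : ℝ) < U.card := by exact_mod_cast hU.card_pos
  set s := Real.log (2 * k / (U.card * p)) with hs
  have hs0 : 0 ≤ s := Real.log_nonneg (by rw [le_div_iff₀ (by positivity)]; linarith)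
  have hes : Real.exp s = 2 * k / (U.card * p) := Real.exp_log (by positivity)
  refine (gnpProb_mono h0.le h1 ?_).trans
    ((gnp_chernoff' h0.le h1 (inE U) (inE_sub U) s (k * U.card)).trans ?_)
  · intro G hG
    rw [eIn_eq] at hG
    exact mul_le_mul_of_nonneg_left hG.le hs0
  · refine Real.exp_le_exp.2 ?_
    have h2 := inE_card U
    have h3 : p * (Real.exp s - 1) * (inE U).card ≤ p * Real.exp s * ((U.card : ℝ) ^ 2 / 2) := by
      have : (0 : ℝ) ≤ (inE U).card := Nat.cast_nonneg _
      have he := Real.exp_pos s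
      have e1 : p * (Real.exp s - 1) * (inE U).card ≤ p * Real.exp s * (inE U).card := by
        nlinarith [mul_nonneg h0.le this]
      refine e1.trans (mul_le_mul_of_nonneg_left (by linarith) (by positivity))
    have h4 : p * Real.exp s * ((U.card : ℝ) ^ 2 / 2) = k * U.card := by
      rw [hes]
      field_simp
    linarith

lemma tail_low {n : ℕ} {p δ : ℝ} (h0 : 0 ≤ p) (h1 : p ≤ 1) (hd0 : 0 < δ) (hd1 : δ ≤ 1)
    (U W : Finset (Fin n)) (hUW : Disjoint U W) :
    gnpProb n p (fun G => (eBetween G U W : ℝ) < (1 - δ) * (U.card * W.card * p)) ≤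
      Real.exp (-(δ ^ 2 / 4) * (U.card * W.card * p)) := by
  refine (gnpProb_mono h0 h1 ?_).trans
    ((gnp_chernoff' h0 h1 (betE U W) (betE_sub hUW) (-(δ / 2))
      ((1 - δ) * (U.card * W.card * p))).trans ?_)
  · intro G hG
    rw [eBetween_eq G hUW] at hG
    nlinarith
  · refine Real.exp_le_exp.2 ?_
    rw [betE_card hUW]
    push_cast
    have := Real.abs_exp_sub_one_sub_id_le (x := -(δ / 2)) (by rw [abs_le]; constructor <;> linarith)
    have h2 := (abs_le.1 this).2
    have hN : (0 : ℝ) ≤ U.card * W.card * p := by positivity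
    nlinarith [mul_le_mul_of_nonneg_left h2 hN]

lemma tail_up {n : ℕ} {p δ : ℝ} (h0 : 0 ≤ p) (h1 : p ≤ 1) (hd0 : 0 < δ) (hd1 : δ ≤ 1)
    (U W : Finset (Fin n)) (hUW : Disjoint U W) :
    gnpProb n p (fun G => (1 + δ) * (U.card * W.card * p) < (eBetween G U W : ℝ)) ≤
      Real.exp (-(δ ^ 2 / 4) * (U.card * W.card * p)) := by
  refine (gnpProb_mono h0 h1 ?_).trans
    ((gnp_chernoff' h0 h1 (betE U W) (betE_sub hUW) (δ / 2)
      ((1 + δ) * (U.card * W.card * p))).trans ?_)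
  · intro G hG
    rw [eBetween_eq G hUW] at hG
    nlinarith
  · refine Real.exp_le_exp.2 ?_
    rw [betE_card hUW]
    push_cast
    have := Real.abs_exp_sub_one_sub_id_le (x := (δ / 2)) (by rw [abs_le]; constructor <;> linarith)
    have h2 := (abs_le.1 this).2
    have hN : (0 : ℝ) ≤ U.card * W.card * p := by positivity
    nlinarith [mul_le_mul_of_nonneg_left h2 hN]

lemma union_sets {n : ℕ} {p r : ℝ} (h0 : 0 ≤ p) (h1 : p ≤ 1) (hr0 : 0 ≤ r) (hr : r ≤ 1 / 2)
    (Bad : Finset (Fin n) → SimpleGraph (Fin n) → Prop)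
    (hB : ∀ U : Finset (Fin n), U.Nonempty →
      gnpProb n p (Bad U) ≤ (r * U.card / (Real.exp 1 * n)) ^ U.card) :
    gnpProb n p (fun G => ∃ U : Finset (Fin n), U.Nonempty ∧ Bad U G) ≤ 2 * r := by
  refine (gnpProb_union h0 h1 (fun U G => U.Nonempty ∧ Bad U G)).trans ?_
  set h : ℕ → ℝ := fun j => if j = 0 then 0 else (r * j / (Real.exp 1 * n)) ^ j with hh
  have e1 : ∑ U : Finset (Fin n), gnpProb n p (fun G => U.Nonempty ∧ Bad U G) ≤
      ∑ U : Finset (Fin n), h U.card := by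
    refine Finset.sum_le_sum fun U _ => ?_
    by_cases hU : U.Nonempty
    · have : U.card ≠ 0 := hU.card_pos.ne'
      simp only [hh, this, if_false]
      exact (gnpProb_mono h0 h1 fun G hG => hG.2).trans (hB U hU)
    · rw [gnpProb_false fun G hG => hU hG.1]
      rw [Finset.not_nonempty_iff_eq_empty.1 hU]
      simp [hh]
  refine e1.trans ?_
  have e2 : ∑ U : Finset (Fin n), h U.card = ∑ j ∈ Finset.range (n + 1), n.choose j • h j := by
    have := Finset.sum_powerset_apply_card h (x := (Finset.univ : Finset (Fin n)))
    simpa using this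
  rw [e2, Finset.sum_range_succ']
  simp only [hh, Nat.add_eq_zero_iff, one_ne_zero, and_false, if_false, if_true, smul_zero,
    add_zero]
  have e3 : ∀ j ∈ Finset.range n,
      n.choose (j + 1) • (r * ((j + 1 : ℕ) : ℝ) / (Real.exp 1 * n)) ^ (j + 1) ≤
        r * (1 / 2 : ℝ) ^ j := by
    intro j hj
    have hn : (0 : ℝ) < n := by
      have := Finset.mem_range.1 hj
      exact_mod_cast (by omega : 0 < n)
    rw [nsmul_eq_mul]
    set i := j + 1 with hi
    have f1 : (n.choose i : ℝ) ≤ (n : ℝ) ^ i / i.factorial := Nat.choose_le_pow_div i n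
    have f2 : ((i : ℝ)) ^ i / i.factorial ≤ Real.exp i :=
      Real.pow_div_factorial_le_exp i (by positivity) i
    have f3 : Real.exp (i : ℝ) = Real.exp 1 ^ i := by rw [← Real.exp_nat_mul, mul_one]
    have hfac : (0 : ℝ) < i.factorial := by exact_mod_cast Nat.factorial_pos i
    have he : 0 < Real.exp 1 := Real.exp_pos 1
    have f4 : (n.choose i : ℝ) * (r * i / (Real.exp 1 * n)) ^ i ≤ r ^ i := by
      calc (n.choose i : ℝ) * (r * i / (Real.exp 1 * n)) ^ i
          ≤ (n : ℝ) ^ i / i.factorial * (r * i / (Real.exp 1 * n)) ^ i := by gcongr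
        _ = r ^ i * ((i : ℝ) ^ i / i.factorial) / Real.exp 1 ^ i := by
            rw [div_pow, mul_pow, mul_pow]
            field_simp
        _ ≤ r ^ i * Real.exp i / Real.exp 1 ^ i := by gcongr
        _ = r ^ i := by rw [f3]; field_simp
    refine f4.trans ?_
    rw [hi, pow_succ, mul_comm]
    gcongr
  refine (Finset.sum_le_sum e3).trans ?_
  rw [← Finset.mul_sum]
  have := sum_geometric_two_le n
  nlinarith

lemma tail_pair {n : ℕ} {p : ℝ} (h0 : 0 ≤ p) (h1 : p ≤ 1) (v u w : Fin n) (hvu : v ≠ u)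
    (hvw : v ≠ w) (huw : u ≠ w) :
    gnpProb n p (fun G => G.Adj v u ∧ G.Adj v w ∧ (G.degree u : ℝ) < n * p / 100 ∧
      (G.degree w : ℝ) < n * p / 100) ≤ p ^ 2 * Real.exp (4 - 1.24 * (n * p)) := by
  set X : Finset (Fin n) := Finset.univ \ {v, u, w} with hX
  have hdisj : Disjoint ({u, w} : Finset (Fin n)) X := by
    rw [Finset.disjoint_left]
    intro a ha
    simp only [hX, Finset.mem_sdiff, Finset.mem_univ, true_and]
    simp only [Finset.mem_insert, Finset.mem_singleton] at ha ⊢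
    tauto
  set T : Finset (Sym2 (Fin n)) := {s(v, u), s(v, w)} with hT
  have hTc : T.card = 2 := by
    rw [hT, Finset.card_pair]
    intro h
    rw [Sym2.eq_iff] at h
    rcases h with h | h
    · exact huw h.2
    · exact hvw h.1
  have hTs : T ⊆ allE n := by
    intro e he
    simp only [hT, Finset.mem_insert, Finset.mem_singleton] at he
    rw [mem_allE]
    rcases he with rfl | rfl <;> simpa
  have hST : Disjoint (betE {u, w} X) T := by
    rw [Finset.disjoint_right]
    intro e he hb
    rw [betE, Finset.mem_image] at hb
    obtain ⟨⟨a, b⟩, hab, rfl⟩ := hb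
    simp only [hX, Finset.mem_product, Finset.mem_sdiff, Finset.mem_univ, true_and,
      Finset.mem_insert, Finset.mem_singleton] at hab
    simp only [hT, Finset.mem_insert, Finset.mem_singleton, Sym2.eq_iff] at he
    grind
  have hXc : ((X.card : ℕ) : ℝ) = n - 3 := by
    have h3 : ({v, u, w} : Finset (Fin n)).card = 3 := by
      rw [Finset.card_eq_three]
      exact ⟨v, u, w, hvu, hvw, huw, rfl⟩
    have h4 : ({v, u, w} : Finset (Fin n)).card ≤ n := by
      simpa using Finset.card_le_univ ({v, u, w} : Finset (Fin n))
    rw [hX, Finset.card_sdiff_of_subset (Finset.subset_univ _), Finset.card_univ,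
      Fintype.card_fin, h3]
    rw [h3] at h4
    push_cast [Nat.cast_sub h4]
    ring
  refine (gnpProb_mono h0 h1 ?_).trans
    ((gnp_chernoff h0 h1 (betE {u, w} X) T (betE_sub hdisj) hTs hST (-1)
      (2 * (n * p / 100))).trans ?_)
  · rintro G ⟨a1, a2, a3, a4⟩
    constructor
    · intro e he
      simp only [hT, Finset.mem_insert, Finset.mem_singleton] at he
      rcases he with rfl | rfl <;> simpa
    · rw [← eBetween_eq G hdisj]
      have : eBetween G {u, w} X ≤ G.degree u + G.degree w := by
        unfold eBetween
        have hsub : (({u, w} ×ˢ X).filter (fun q => G.Adj q.1 q.2)) ⊆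
            (G.neighborFinset u).image (fun x => (u, x)) ∪
            (G.neighborFinset w).image (fun x => (w, x)) := by
          rintro ⟨a, b⟩ hab
          simp only [Finset.mem_filter, Finset.mem_product, Finset.mem_insert,
            Finset.mem_singleton] at hab
          simp only [Finset.mem_union, Finset.mem_image, SimpleGraph.mem_neighborFinset]
          rcases hab with ⟨⟨rfl | rfl, _⟩, h⟩
          · exact Or.inl ⟨b, h, rfl⟩
          · exact Or.inr ⟨b, h, rfl⟩
        refine (Finset.card_le_card hsub).trans ((Finset.card_union_le _ _).trans ?_)
        exact Nat.add_le_add Finset.card_image_le Finset.card_image_le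
      have h5 : (eBetween G {u, w} X : ℝ) ≤ G.degree u + G.degree w := by exact_mod_cast this
      linarith
  · rw [hTc, betE_card hdisj, Finset.card_pair huw]
    push_cast
    rw [hXc]
    refine mul_le_mul_of_nonneg_left (Real.exp_le_exp.2 ?_) (by positivity)
    have he : Real.exp (-1) < 0.37 := by
      have := Real.exp_neg_one_lt_d9
      linarith
    have hn3 : (0 : ℝ) ≤ n - 3 := by rw [← hXc]; positivity
    have : p * (Real.exp (-1) - 1) * (2 * (n - 3)) ≤ p * (-0.63) * (2 * (n - 3)) := by
      gcongr
      linarith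
    nlinarith

/-! ### Asymptotic events -/

lemma ev_log (p : ℕ → ℝ) (hp : ∀ n : ℕ, Real.log n / n ≤ p n) :
    ∀ᶠ n : ℕ in atTop, Real.log n ≤ n * p n := by
  filter_upwards [eventually_gt_atTop 0] with n hn
  have hn' : (0 : ℝ) < n := by exact_mod_cast hn
  have := hp n
  rw [div_le_iff₀ hn'] at this
  linarith

lemma tendsto_logn : Tendsto (fun n : ℕ => Real.log n) atTop atTop :=
  Real.tendsto_log_atTop.comp tendsto_natCast_atTop_atTop

lemma tendsto_np (p : ℕ → ℝ) (hp : ∀ n : ℕ, Real.log n / n ≤ p n) :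
    Tendsto (fun n : ℕ => n * p n) atTop atTop :=
  tendsto_atTop_mono' _ (ev_log p hp) tendsto_logn

def evA (n : ℕ) (p : ℝ) (G : SimpleGraph (Fin n)) : Prop :=
  ∀ v u w : Fin n, u ≠ w → G.Adj v u → G.Adj v w → (G.degree u : ℝ) < n * p / 100 →
    (G.degree w : ℝ) < n * p / 100 → False

def evB (n : ℕ) (p : ℝ) (G : SimpleGraph (Fin n)) : Prop :=
  ∀ U : Finset (Fin n), (U.card : ℝ) < (n : ℝ) ^ (0.11 : ℝ) * Real.log n →
    (eIn G U : ℝ) ≤ (n * p) ^ (0.13 : ℝ) * U.card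

def evC (n : ℕ) (p β : ℝ) (G : SimpleGraph (Fin n)) : Prop :=
  ∀ U : Finset (Fin n), (U.card : ℝ) < 12 * β * n →
    (eIn G U : ℝ) ≤ 50 * β * (n * p) * U.card

def evL (n : ℕ) (p β δ : ℝ) (G : SimpleGraph (Fin n)) : Prop :=
  ∀ U W : Finset (Fin n), Disjoint U W → β / 2 * n ≤ U.card → (n : ℝ) / 4 ≤ W.card →
    (1 - δ) * (U.card * W.card * p) ≤ (eBetween G U W : ℝ)

def evM (n : ℕ) (p β δ : ℝ) (G : SimpleGraph (Fin n)) : Prop :=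
  ∀ U W : Finset (Fin n), Disjoint U W → β / 2 * n ≤ U.card → (n : ℝ) / 4 ≤ W.card →
    (eBetween G U W : ℝ) ≤ (1 + δ) * (U.card * W.card * p)

lemma tendsto_A (p : ℕ → ℝ) (hp0 : ∀ n, 0 ≤ p n) (hp1 : ∀ n, p n ≤ 1)
    (hp : ∀ n : ℕ, Real.log n / n ≤ p n) : Tendsto (fun n => gnpProb n (p n) (fun G => ¬ evA n (p n) G)) atTop (nhds 0) := by
  have hlim : Tendsto (fun n : ℕ => 200 * Real.exp 4 * Real.exp (-(0.14 * Real.log n))) atTop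
      (nhds 0) := by
    have h1 : Tendsto (fun n : ℕ => 0.14 * Real.log n) atTop atTop :=
      tendsto_logn.const_mul_atTop (by norm_num)
    have h2 := (Real.tendsto_exp_neg_atTop_nhds_zero.comp h1).const_mul (200 * Real.exp 4)
    simpa using h2
  refine tendsto_of_tendsto_of_tendsto_of_le_of_le' tendsto_const_nhds hlim
    (Eventually.of_forall fun n => gnpProb_nonneg (hp0 n) (hp1 n) _) ?_
  filter_upwards [ev_log p hp, eventually_gt_atTop 0] with n hlog hn
  have hn' : (0 : ℝ) < n := by exact_mod_cast hn
  set P := p n with hP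
  have h0 : 0 ≤ P := hp0 n
  have h1 : P ≤ 1 := hp1 n
  have step1 : gnpProb n P (fun G => ¬ evA n P G) ≤
      ∑ _x : Fin n × Fin n × Fin n, P ^ 2 * Real.exp (4 - 1.24 * (n * P)) := by
    refine (gnpProb_mono h0 h1 ?_).trans ((gnpProb_union h0 h1
      (fun (x : Fin n × Fin n × Fin n) G => x.2.1 ≠ x.2.2 ∧ G.Adj x.1 x.2.1 ∧ G.Adj x.1 x.2.2 ∧
        (G.degree x.2.1 : ℝ) < n * P / 100 ∧ (G.degree x.2.2 : ℝ) < n * P / 100)).trans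
      (Finset.sum_le_sum ?_))
    · intro G hG
      simp only [evA, not_forall] at hG
      obtain ⟨v, u, w, a1, a2, a3, a4, a5, _⟩ := hG
      exact ⟨(v, u, w), a1, a2, a3, a4, a5⟩
    · rintro ⟨v, u, w⟩ _
      by_cases hh : v ≠ u ∧ v ≠ w ∧ u ≠ w
      · exact (gnpProb_mono h0 h1 fun G hG => hG.2).trans
          (tail_pair h0 h1 v u w hh.1 hh.2.1 hh.2.2)
      · rw [gnpProb_false]
        · positivity
        · rintro G ⟨b1, b2, b3, _⟩
          exact hh ⟨b2.ne, b3.ne, b1⟩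
  refine step1.trans ?_
  rw [Finset.sum_const, Finset.card_univ, nsmul_eq_mul]
  simp only [Fintype.card_prod, Fintype.card_fin]
  push_cast
  set d := (n : ℝ) * P with hd
  have hd0 : 0 ≤ d := by positivity
  have e1 : d ^ 2 ≤ 200 * Real.exp (0.1 * d) := by
    have := Real.pow_div_factorial_le_exp (0.1 * d) (by positivity) 2
    norm_num at this ⊢
    nlinarith
  have e2 : (n : ℝ) = Real.exp (Real.log n) := (Real.exp_log hn').symm
  calc (n : ℝ) * (n * n) * (P ^ 2 * Real.exp (4 - 1.24 * d))
      = n * d ^ 2 * Real.exp (4 - 1.24 * d) := by rw [hd]; ring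
    _ ≤ n * (200 * Real.exp (0.1 * d)) * Real.exp (4 - 1.24 * d) := by gcongr
    _ = 200 * Real.exp (Real.log n + 0.1 * d + (4 - 1.24 * d)) := by
        rw [Real.exp_add, Real.exp_add, ← e2]; ring
    _ ≤ 200 * Real.exp (4 + -(0.14 * Real.log n)) := by
        exact mul_le_mul_of_nonneg_left (Real.exp_le_exp.2 (by linarith)) (by norm_num)
    _ = _ := by rw [Real.exp_add]; ring

lemma tendsto_C (p : ℕ → ℝ) (hp0 : ∀ n, 0 ≤ p n) (hp1 : ∀ n, p n ≤ 1)
    (hp : ∀ n : ℕ, Real.log n / n ≤ p n) (β : ℝ) (hβ : 0 < β) :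
    Tendsto (fun n => gnpProb n (p n) (fun G => ¬ evC n (p n) β G)) atTop (nhds 0) := by
  have hk : Tendsto (fun n : ℕ => 50 * β * (n * p n)) atTop atTop :=
    (tendsto_np p hp).const_mul_atTop (by positivity)
  have hr : Tendsto (fun n : ℕ => Real.exp (3 - 50 * β * (n * p n)) / (100 * β)) atTop
      (nhds 0) := by
    have h2 := (Real.tendsto_exp_neg_atTop_nhds_zero.comp hk).const_mul (Real.exp 3 / (100 * β))
    rw [mul_zero] at h2
    refine h2.congr fun n => ?_
    simp only [Function.comp]
    rw [sub_eq_add_neg, Real.exp_add]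
    ring
  have hlim := hr.const_mul 2
  rw [mul_zero] at hlim
  refine tendsto_of_tendsto_of_tendsto_of_le_of_le' tendsto_const_nhds hlim
    (Eventually.of_forall fun n => gnpProb_nonneg (hp0 n) (hp1 n) _) ?_
  filter_upwards [hr.eventually (ge_mem_nhds (show (0 : ℝ) < 1 / 2 by norm_num)),
    hk.eventually_ge_atTop 2, eventually_gt_atTop 0] with n hr2 hk2 hn
  have hn' : (0 : ℝ) < n := by exact_mod_cast hn
  set P := p n with hP
  have h0 : 0 ≤ P := hp0 n
  have h1 : P ≤ 1 := hp1 n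
  set k := 50 * β * (n * P) with hkdef
  have hPpos : 0 < P := by
    rcases h0.lt_or_eq with h | h
    · exact h
    · rw [hkdef, ← h] at hk2
      norm_num at hk2
  set r := Real.exp (3 - k) / (100 * β) with hrdef
  have hr0 : 0 ≤ r := by positivity
  refine (gnpProb_mono h0 h1 ?_).trans (union_sets h0 h1 hr0 hr2
    (fun U G => (U.card : ℝ) < 12 * β * n ∧ k * U.card < (eIn G U : ℝ)) ?_)
  · intro G hG
    simp only [evC, not_forall, not_le] at hG
    obtain ⟨U, a1, a2⟩ := hG
    refine ⟨U, ?_, a1, a2⟩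
    by_contra hne
    rw [Finset.not_nonempty_iff_eq_empty] at hne
    subst hne
    rw [eIn_eq] at a2
    have : (inE (∅ : Finset (Fin n))).card = 0 := by
      have := inE_card (∅ : Finset (Fin n))
      simp only [Finset.card_empty, Nat.cast_zero] at this
      have h2 : ((inE (∅ : Finset (Fin n))).card : ℝ) ≤ 0 := by nlinarith
      exact_mod_cast le_antisymm h2 (Nat.cast_nonneg _)
    rw [Finset.card_eq_zero] at this
    simp [this] at a2
  · intro U hU
    by_cases hsz : (U.card : ℝ) < 12 * β * n
    swap
    · rw [gnpProb_false fun G hG => hsz hG.1]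
      positivity
    have hu : (0 : ℝ) < U.card := by exact_mod_cast hU.card_pos
    refine (gnpProb_mono h0 h1 fun G hG => hG.2).trans
      ((tail_in hPpos h1 U hU k (by linarith) ?_).trans ?_)
    · rw [hkdef]
      nlinarith [mul_pos (mul_pos hβ hn') hPpos]
    · have hq : 2 * k / (U.card * P) = 100 * β * n / U.card := by
        rw [hkdef]
        field_simp
        ring
      rw [hq]
      set Y := Real.log (100 * β * n / U.card) - 1 with hY
      have hY1 : 1 ≤ Y := by
        have : 2 ≤ Real.log (100 * β * n / U.card) := by
          rw [Real.le_log_iff_exp_le (by positivity)]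
          have e1 : Real.exp 2 ≤ 8 := by
            have := Real.exp_one_lt_d9
            have h2 : Real.exp 2 = Real.exp 1 ^ 2 := by rw [← Real.exp_nat_mul]; norm_num
            rw [h2]
            nlinarith [Real.exp_pos 1]
          refine e1.trans ?_
          rw [le_div_iff₀ hu]
          nlinarith [mul_pos hβ hn']
        linarith
      have hbase : r * U.card / (Real.exp 1 * n) = Real.exp (1 - k - Y) := by
        have : Real.exp (1 - k - Y) = Real.exp (3 - k) *
            (Real.exp (Real.log (100 * β * n / U.card)))⁻¹ * (Real.exp 1)⁻¹ := by
          rw [← Real.exp_neg, ← Real.exp_neg, ← Real.exp_add, ← Real.exp_add]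
          congr 1
          rw [hY]
          ring
        rw [this, Real.exp_log (by positivity), hrdef]
        field_simp
      rw [hbase, ← Real.exp_nat_mul]
      refine Real.exp_le_exp.2 ?_
      nlinarith [mul_nonneg hu.le (mul_nonneg (sub_nonneg.2 (by linarith : (1 : ℝ) ≤ k))
        (sub_nonneg.2 hY1))]

lemma tendsto_pairs (p : ℕ → ℝ) (hp0 : ∀ n, 0 ≤ p n) (hp1 : ∀ n, p n ≤ 1)
    (hp : ∀ n : ℕ, Real.log n / n ≤ p n) (β δ : ℝ) (hβ : 0 < β) (hd0 : 0 < δ)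
    (Bad : ∀ n : ℕ, Finset (Fin n) → Finset (Fin n) → SimpleGraph (Fin n) → Prop)
    (hB : ∀ n U W, Disjoint U W → gnpProb n (p n) (Bad n U W) ≤
      Real.exp (-(δ ^ 2 / 4) * (U.card * W.card * p n))) :
    Tendsto (fun n => gnpProb n (p n) (fun G => ∃ U W : Finset (Fin n), Disjoint U W ∧
      β / 2 * n ≤ U.card ∧ (n : ℝ) / 4 ≤ W.card ∧ Bad n U W G)) atTop (nhds 0) := by
  have hlim : Tendsto (fun n : ℕ => Real.exp (-(n : ℝ))) atTop (nhds 0) :=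
    Real.tendsto_exp_neg_atTop_nhds_zero.comp tendsto_natCast_atTop_atTop
  refine tendsto_of_tendsto_of_tendsto_of_le_of_le' tendsto_const_nhds hlim
    (Eventually.of_forall fun n => gnpProb_nonneg (hp0 n) (hp1 n) _) ?_
  have hc : 0 < β * δ ^ 2 / 32 := by positivity
  filter_upwards [ev_log p hp,
    (tendsto_logn.const_mul_atTop hc).eventually_ge_atTop (1 + 2 * Real.log 2)] with n hlog hbig
  have h0 := hp0 n
  have h1 := hp1 n
  have hn0 : (0 : ℝ) ≤ n := Nat.cast_nonneg n
  have step1 : gnpProb n (p n) (fun G => ∃ U W : Finset (Fin n), Disjoint U W ∧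
      β / 2 * n ≤ U.card ∧ (n : ℝ) / 4 ≤ W.card ∧ Bad n U W G) ≤
      ∑ _x : Finset (Fin n) × Finset (Fin n),
        Real.exp (-(n * (1 + 2 * Real.log 2))) := by
    refine (gnpProb_mono h0 h1 ?_).trans ((gnpProb_union h0 h1
      (fun (x : Finset (Fin n) × Finset (Fin n)) G => Disjoint x.1 x.2 ∧
      β / 2 * n ≤ x.1.card ∧ (n : ℝ) / 4 ≤ x.2.card ∧ Bad n x.1 x.2 G)).trans
      (Finset.sum_le_sum ?_))
    · rintro G ⟨U, W, h⟩
      exact ⟨(U, W), h⟩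
    · rintro ⟨U, W⟩ _
      by_cases hh : Disjoint U W ∧ β / 2 * n ≤ U.card ∧ (n : ℝ) / 4 ≤ W.card
      · obtain ⟨a1, a2, a3⟩ := hh
        refine (gnpProb_mono h0 h1 fun G hG => hG.2.2.2).trans ((hB n U W a1).trans
          (Real.exp_le_exp.2 ?_))
        have b1 : (β / 2 * n) * (n / 4) ≤ (U.card : ℝ) * W.card := by gcongr
        have b2 : (β / 2 * n) * (n / 4) * p n ≤ (U.card : ℝ) * W.card * p n := by gcongr
        have b3 : (1 + 2 * Real.log 2) ≤ β * δ ^ 2 / 32 * (n * p n) :=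
          hbig.trans (by gcongr)
        have b4 := mul_le_mul_of_nonneg_left b3 hn0
        have b5 := mul_le_mul_of_nonneg_left b2 (show 0 ≤ δ ^ 2 / 4 by positivity)
        nlinarith
      · rw [gnpProb_false]
        · positivity
        · rintro G ⟨b1, b2, b3, _⟩
          exact hh ⟨b1, b2, b3⟩
  refine step1.trans ?_
  rw [Finset.sum_const, Finset.card_univ, nsmul_eq_mul]
  simp only [Fintype.card_prod, Fintype.card_finset, Fintype.card_fin]
  push_cast
  have h2 : (2 : ℝ) ^ n = Real.exp (n * Real.log 2) := by
    rw [Real.exp_nat_mul, Real.exp_log (by norm_num)]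
  rw [h2, ← Real.exp_add, ← Real.exp_add]
  refine Real.exp_le_exp.2 ?_
  linarith

lemma tendsto_L (p : ℕ → ℝ) (hp0 : ∀ n, 0 ≤ p n) (hp1 : ∀ n, p n ≤ 1)
    (hp : ∀ n : ℕ, Real.log n / n ≤ p n) (β δ : ℝ) (hβ : 0 < β) (hd0 : 0 < δ) (hd1 : δ ≤ 1) :
    Tendsto (fun n => gnpProb n (p n) (fun G => ¬ evL n (p n) β δ G)) atTop (nhds 0) := by
  refine (tendsto_pairs p hp0 hp1 hp β δ hβ hd0 _ (fun n U W h =>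
    tail_low (hp0 n) (hp1 n) hd0 hd1 U W h)).congr fun n => ?_
  congr 1
  ext G
  simp only [evL, not_forall, not_le, exists_prop]

lemma tendsto_M (p : ℕ → ℝ) (hp0 : ∀ n, 0 ≤ p n) (hp1 : ∀ n, p n ≤ 1)
    (hp : ∀ n : ℕ, Real.log n / n ≤ p n) (β δ : ℝ) (hβ : 0 < β) (hd0 : 0 < δ) (hd1 : δ ≤ 1) :
    Tendsto (fun n => gnpProb n (p n) (fun G => ¬ evM n (p n) β δ G)) atTop (nhds 0) := by
  refine (tendsto_pairs p hp0 hp1 hp β δ hβ hd0 _ (fun n U W h =>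
    tail_up (hp0 n) (hp1 n) hd0 hd1 U W h)).congr fun n => ?_
  congr 1
  ext G
  simp only [evM, not_forall, not_le, exists_prop]

lemma tendsto_B (p : ℕ → ℝ) (hp0 : ∀ n, 0 ≤ p n) (hp1 : ∀ n, p n ≤ 1)
    (hp : ∀ n : ℕ, Real.log n / n ≤ p n) :
    Tendsto (fun n => gnpProb n (p n) (fun G => ¬ evB n (p n) G)) atTop (nhds 0) := by
  have hlim : Tendsto (fun n : ℕ => 2 * (1 / (n : ℝ))) atTop (nhds 0) := by
    have := (tendsto_one_div_atTop_nhds_zero_nat (𝕜 := ℝ)).const_mul 2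
    simpa using this
  refine tendsto_of_tendsto_of_tendsto_of_le_of_le' tendsto_const_nhds hlim
    (Eventually.of_forall fun n => gnpProb_nonneg (hp0 n) (hp1 n) _) ?_
  have hl1 : ∀ᶠ n : ℕ in atTop, Real.log n ≤ (n : ℝ) ^ (0.007 : ℝ) := by
    have := (isLittleO_log_rpow_atTop (show (0 : ℝ) < 0.007 by norm_num)).bound
      (show (0 : ℝ) < 1 by norm_num)
    filter_upwards [tendsto_natCast_atTop_atTop.eventually this] with n h
    rw [one_mul, Real.norm_eq_abs, Real.norm_eq_abs, abs_of_nonneg (Real.rpow_nonneg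
      (Nat.cast_nonneg n) _)] at h
    exact (le_abs_self _).trans h
  have hk60 : ∀ᶠ n : ℕ in atTop, (60 : ℝ) ≤ (n * p n) ^ (0.13 : ℝ) :=
    ((tendsto_rpow_atTop (show (0 : ℝ) < 0.13 by norm_num)).comp
      (tendsto_np p hp)).eventually_ge_atTop 60
  filter_upwards [ev_log p hp, hl1, hk60, eventually_ge_atTop 2,
    tendsto_logn.eventually_ge_atTop 61] with n hlog hl hk hn hl61
  have hn' : (2 : ℝ) ≤ n := by exact_mod_cast hn
  have hn0 : (0 : ℝ) < n := by linarith
  set P := p n with hP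
  have h0 : 0 ≤ P := hp0 n
  have h1 : P ≤ 1 := hp1 n
  have hd0 : 0 < (n : ℝ) * P := by linarith
  have hPpos : 0 < P := by
    by_contra h
    have : P = 0 := le_antisymm (not_lt.1 h) h0
    rw [this] at hd0
    simp at hd0
  set d := (n : ℝ) * P with hd
  set k := d ^ (0.13 : ℝ) with hkdef
  by_cases hbig : (n : ℝ) ^ (0.9 : ℝ) ≤ d
  · rw [gnpProb_false]
    · positivity
    · intro G hG
      apply hG
      intro U hU
      have hkn : (n : ℝ) ^ (0.11 : ℝ) * Real.log n ≤ k := by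
        calc (n : ℝ) ^ (0.11 : ℝ) * Real.log n ≤ (n : ℝ) ^ (0.11 : ℝ) * (n : ℝ) ^ (0.007 : ℝ) := by
              gcongr
          _ = ((n : ℝ) ^ (0.9 : ℝ)) ^ (0.13 : ℝ) := by
              rw [← Real.rpow_add hn0, ← Real.rpow_mul hn0.le]
              norm_num
          _ ≤ k := by
              rw [hkdef]
              gcongr
      have a1 : (eIn G U : ℝ) ≤ (inE U).card := by
        rw [eIn_eq]
        exact_mod_cast Finset.card_le_card Finset.inter_subset_right
      have a2 := inE_card U
      have : (0 : ℝ) ≤ U.card := Nat.cast_nonneg _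
      nlinarith
  · rw [not_le] at hbig
    refine (gnpProb_mono h0 h1 ?_).trans (union_sets h0 h1 (r := 1 / (n : ℝ)) (by positivity)
      (by gcongr)
      (fun U G => (U.card : ℝ) < (n : ℝ) ^ (0.11 : ℝ) * Real.log n ∧
        k * U.card < (eIn G U : ℝ)) ?_)
    · intro G hG
      simp only [evB, not_forall, not_le] at hG
      obtain ⟨U, a1, a2⟩ := hG
      refine ⟨U, ?_, a1, a2⟩
      by_contra hne
      rw [Finset.not_nonempty_iff_eq_empty] at hne
      subst hne
      rw [eIn_eq] at a2
      have : (inE (∅ : Finset (Fin n))).card = 0 := by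
        have := inE_card (∅ : Finset (Fin n))
        simp only [Finset.card_empty, Nat.cast_zero] at this
        have h2 : ((inE (∅ : Finset (Fin n))).card : ℝ) ≤ 0 := by nlinarith
        exact_mod_cast le_antisymm h2 (Nat.cast_nonneg _)
      rw [Finset.card_eq_zero] at this
      simp [this] at a2
    · intro U hU
      by_cases hsz : (U.card : ℝ) < (n : ℝ) ^ (0.11 : ℝ) * Real.log n
      swap
      · rw [gnpProb_false fun G hG => hsz hG.1]
        positivity
      have hu : (1 : ℝ) ≤ U.card := by exact_mod_cast hU.card_pos
      have hkey : U.card * P * (n : ℝ) ^ (0.05 : ℝ) ≤ k := by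
        have hdk : d ≤ k * (n : ℝ) ^ (0.783 : ℝ) := by
          calc d = k * d ^ (0.87 : ℝ) := by
                rw [hkdef, ← Real.rpow_add hd0]
                norm_num
            _ ≤ k * ((n : ℝ) ^ (0.9 : ℝ)) ^ (0.87 : ℝ) := by gcongr
            _ = k * (n : ℝ) ^ (0.783 : ℝ) := by
                rw [← Real.rpow_mul hn0.le]
                norm_num
        have hPd : P = d / n := by rw [hd]; field_simp
        calc U.card * P * (n : ℝ) ^ (0.05 : ℝ)
            ≤ ((n : ℝ) ^ (0.11 : ℝ) * (n : ℝ) ^ (0.007 : ℝ)) *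
              (k * (n : ℝ) ^ (0.783 : ℝ) / n) * (n : ℝ) ^ (0.05 : ℝ) := by
              rw [hPd]
              gcongr
              exact hsz.le.trans (by gcongr)
          _ = k * ((n : ℝ) ^ (0.11 : ℝ) * (n : ℝ) ^ (0.007 : ℝ) * (n : ℝ) ^ (0.783 : ℝ) *
              (n : ℝ) ^ (0.05 : ℝ) * (n : ℝ) ^ (-1 : ℝ)) := by
              rw [Real.rpow_neg_one]
              ring
          _ = k * (n : ℝ) ^ (-0.05 : ℝ) := by
              rw [← Real.rpow_add hn0, ← Real.rpow_add hn0, ← Real.rpow_add hn0,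
                ← Real.rpow_add hn0]
              norm_num
          _ ≤ k * 1 := by
              gcongr
              exact Real.rpow_le_one_of_one_le_of_nonpos (by linarith) (by norm_num)
          _ = k := mul_one k
      have hn05 : 1 ≤ (n : ℝ) ^ (0.05 : ℝ) := Real.one_le_rpow (by linarith) (by norm_num)
      have hUP : 0 < U.card * P := by positivity
      refine (gnpProb_mono h0 h1 fun G hG => hG.2).trans
        ((tail_in hPpos h1 U hU k (by linarith) ?_).trans ?_)
      · nlinarith
      · have hY : 0.05 * Real.log n ≤ Real.log (2 * k / (U.card * P)) := by
          rw [← Real.log_rpow hn0]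
          refine Real.log_le_log (by positivity) ?_
          rw [le_div_iff₀ hUP]
          nlinarith
        set Y := Real.log (2 * k / (U.card * P)) with hYdef
        have hbase : Real.exp (-1 - 2 * Real.log n) ≤
            1 / (n : ℝ) * U.card / (Real.exp 1 * n) := by
          have : Real.exp (-1 - 2 * Real.log n) = 1 / (n : ℝ) * 1 / (Real.exp 1 * n) := by
            rw [show -1 - 2 * Real.log n = -1 + (-Real.log n + -Real.log n) by ring, Real.exp_add,
              Real.exp_add, Real.exp_neg, Real.exp_neg, Real.exp_log hn0]
            field_simp
          rw [this]
          gcongr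
        refine le_trans ?_ (pow_le_pow_left₀ (Real.exp_pos _).le hbase _)
        rw [← Real.exp_nat_mul]
        refine Real.exp_le_exp.2 ?_
        have hY1 : 0 ≤ Y - 1 := by linarith
        have : 1 + 2 * Real.log n ≤ k * (Y - 1) := by nlinarith
        nlinarith

/-! ### Deterministic part -/

lemma eIn_induce {n : ℕ} (G : SimpleGraph (Fin n)) (S : Set (Fin n)) [Fintype S]
    (K : SimpleGraph S) (hK : K ≤ G.induce S) (U : Finset S) :
    eIn K U ≤ eIn G (U.map (Function.Embedding.subtype _)) := by
  unfold eIn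
  refine Finset.card_le_card_of_injOn (Sym2.map Subtype.val) ?_
    ((Sym2.map.injective Subtype.val_injective).injOn)
  intro e he
  simp only [Finset.coe_filter, Set.mem_ofPred_eq, SimpleGraph.mem_edgeFinset] at he ⊢
  obtain ⟨h1, h2⟩ := he
  induction e using Sym2.ind with
  | _ a b =>
    have hadj : G.Adj a b := hK h1
    refine ⟨by simpa using hadj, ?_⟩
    intro v hv
    simp only [Sym2.map_mk, Sym2.mem_iff] at hv
    rw [Finset.mem_map]
    rcases hv with rfl | rfl
    · exact ⟨a, h2 a (by simp), rfl⟩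
    · exact ⟨b, h2 b (by simp), rfl⟩

lemma eBetween_induce {n : ℕ} (G : SimpleGraph (Fin n)) (S : Set (Fin n)) [Fintype S]
    (U Z : Finset S) :
    eBetween G (U.map (Function.Embedding.subtype _)) (Z.map (Function.Embedding.subtype _)) ≤
      eBetween (G.induce S) U Z := by
  unfold eBetween
  have : ((U.map (Function.Embedding.subtype _) ×ˢ Z.map (Function.Embedding.subtype _)).filter
      (fun q : Fin n × Fin n => G.Adj q.1 q.2)) ⊆
      ((U ×ˢ Z).filter (fun q => (G.induce S).Adj q.1 q.2)).image
        (fun q => ((q.1 : Fin n), (q.2 : Fin n))) := by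
    rintro ⟨a, b⟩ h
    simp only [Finset.mem_filter, Finset.mem_product, Finset.mem_map] at h
    obtain ⟨⟨⟨x, hx, rfl⟩, ⟨y, hy, rfl⟩⟩, hadj⟩ := h
    rw [Finset.mem_image]
    exact ⟨(x, y), by simpa [hx, hy] using hadj, rfl⟩
  exact (Finset.card_le_card this).trans Finset.card_image_le

lemma eBetween_diff {V : Type*} [Fintype V] (K H : SimpleGraph V) (U Z : Finset V) :
    eBetween K U Z ≤ eBetween (K \ H) U Z + eBetween H U Z := by
  unfold eBetween
  refine (Finset.card_le_card ?_).trans (Finset.card_union_le _ _)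
  intro q hq
  simp only [Finset.mem_filter, Finset.mem_union, SimpleGraph.sdiff_adj] at hq ⊢
  tauto

lemma eBetween_sum {V : Type*} [Fintype V] (H : SimpleGraph V) (U Z : Finset V) :
    eBetween H U Z = ∑ u ∈ U, (Z.filter (fun z => H.Adj u z)).card := by
  unfold eBetween
  rw [Finset.card_filter, Finset.sum_product]
  refine Finset.sum_congr rfl fun u _ => ?_
  rw [Finset.card_filter]

lemma eBetween_le_deg {V : Type*} [Fintype V] (H : SimpleGraph V) (U Z : Finset V) :
    eBetween H U Z ≤ ∑ u ∈ U, H.degree u := by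
  rw [eBetween_sum]
  refine Finset.sum_le_sum fun u _ => ?_
  rw [← SimpleGraph.card_neighborFinset_eq_degree]
  refine Finset.card_le_card fun z hz => ?_
  simp only [Finset.mem_filter] at hz
  simpa using hz.2

lemma eBetween_self {V : Type*} [Fintype V] (G : SimpleGraph V) (U : Finset V) :
    eBetween G U U ≤ 2 * eIn G U := by
  unfold eBetween
  set F := (U ×ˢ U).filter (fun q => G.Adj q.1 q.2) with hF
  have h1 : F.card ≤ 2 * (F.image (fun q => s(q.1, q.2))).card := by
    refine Finset.card_le_mul_card_image _ 2 ?_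
    intro e _
    induction e using Sym2.ind with
    | _ a b =>
      have : (F.filter (fun q => s(q.1, q.2) = s(a, b))) ⊆ {(a, b), (b, a)} := by
        rintro ⟨x, y⟩ h
        simp only [Finset.mem_filter, Sym2.eq_iff] at h
        simp only [Finset.mem_insert, Finset.mem_singleton, Prod.mk.injEq]
        exact h.2
      exact (Finset.card_le_card this).trans Finset.card_le_two
  refine h1.trans (Nat.mul_le_mul_left 2 ?_)
  unfold eIn
  refine Finset.card_le_card ?_
  intro e he
  rw [Finset.mem_image] at he
  obtain ⟨⟨a, b⟩, hab, rfl⟩ := he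
  simp only [hF, Finset.mem_filter, Finset.mem_product] at hab
  rw [Finset.mem_filter]
  refine ⟨by simpa using hab.2, ?_⟩
  intro v hv
  simp only [Sym2.mem_iff] at hv
  rcases hv with rfl | rfl
  · exact hab.1.1
  · exact hab.1.2

lemma deg_sum {V : Type*} [Fintype V] [DecidableEq V] (G : SimpleGraph V) (U : Finset V) :
    ∑ u ∈ U, G.degree u ≤ 2 * eIn G U + eBetween G U (Finset.univ \ U) := by
  have h := eBetween_self G U
  have : ∑ u ∈ U, G.degree u ≤ eBetween G U U + eBetween G U (Finset.univ \ U) := by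
    rw [eBetween_sum, eBetween_sum, ← Finset.sum_add_distrib]
    refine Finset.sum_le_sum fun u _ => ?_
    rw [← SimpleGraph.card_neighborFinset_eq_degree]
    refine (Finset.card_le_card ?_).trans (Finset.card_union_le _ _)
    intro z hz
    rw [SimpleGraph.mem_neighborFinset] at hz
    simp only [Finset.mem_union, Finset.mem_filter, Finset.mem_sdiff, Finset.mem_univ, true_and]
    tauto
  omega

lemma degree_induce {n : ℕ} (G : SimpleGraph (Fin n)) (S : Set (Fin n)) [Fintype S]
    (H : SimpleGraph S) (v : S) :
    G.degree (v : Fin n) ≤ (G.induce S \ H).degree v + H.degree v +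
      ((G.neighborFinset (v : Fin n)).filter (fun x => x ∉ S)).card := by
  rw [← SimpleGraph.card_neighborFinset_eq_degree, ← SimpleGraph.card_neighborFinset_eq_degree,
    ← SimpleGraph.card_neighborFinset_eq_degree]
  have : G.neighborFinset (v : Fin n) ⊆
      (((G.induce S \ H).neighborFinset v).image Subtype.val ∪
        (H.neighborFinset v).image Subtype.val) ∪
        (G.neighborFinset (v : Fin n)).filter (fun x => x ∉ S) := by
    intro x hx
    by_cases hS : x ∈ S
    · rw [Finset.mem_union, Finset.mem_union, Finset.mem_image, Finset.mem_image]
      left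
      rw [SimpleGraph.mem_neighborFinset] at hx
      by_cases hH : H.Adj v ⟨x, hS⟩
      · right
        exact ⟨⟨x, hS⟩, by simpa using hH, rfl⟩
      · left
        refine ⟨⟨x, hS⟩, ?_, rfl⟩
        rw [SimpleGraph.mem_neighborFinset, SimpleGraph.sdiff_adj]
        exact ⟨hx, hH⟩
    · rw [Finset.mem_union]
      right
      exact Finset.mem_filter.2 ⟨hx, hS⟩
  refine (Finset.card_le_card this).trans ((Finset.card_union_le _ _).trans ?_)
  refine Nat.add_le_add_right ((Finset.card_union_le _ _).trans ?_) _
  exact Nat.add_le_add Finset.card_image_le Finset.card_image_le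

lemma lowDeg_small {n : ℕ} {P ε β : ℝ} (hε1 : ε ≤ 1 / 3) (hβ : 0 < β)
    (hβε : β ≤ ε / 1000) (hd : 0 < n * P) (hbn : 10 ≤ β * n)
    (G : SimpleGraph (Fin n)) (hL : evL n P β (ε / 10) G) :
    ((lowDegSet n (n * P / 100) G).card : ℝ) ≤ β * n := by
  by_contra hcon
  rw [not_le] at hcon
  set D := lowDegSet n (n * P / 100) G with hD
  set m := ⌈β / 2 * n⌉₊ with hm
  have hm1 : β / 2 * n ≤ m := Nat.le_ceil _
  have hm2 : (m : ℝ) < β / 2 * n + 1 := Nat.ceil_lt_add_one (by nlinarith)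
  have hmD : m ≤ D.card := by
    have : (m : ℝ) ≤ D.card := by nlinarith
    exact_mod_cast this
  obtain ⟨U, hUD, hUc⟩ := Finset.exists_subset_card_eq hmD
  have hW : ((Finset.univ \ U).card : ℝ) = n - m := by
    have h4 : m ≤ n := hmD.trans (by simpa using Finset.card_le_univ D)
    rw [Finset.card_sdiff_of_subset (Finset.subset_univ _), Finset.card_univ, Fintype.card_fin,
      hUc, Nat.cast_sub h4]
  have hn0 : (0 : ℝ) ≤ n := Nat.cast_nonneg n
  have hW2 : (n : ℝ) / 2 ≤ ((Finset.univ \ U).card : ℝ) := by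
    rw [hW]
    nlinarith
  have h1 := hL U (Finset.univ \ U) Finset.disjoint_sdiff (by rw [hUc]; exact hm1)
    (by linarith)
  have h2 : (eBetween G U (Finset.univ \ U) : ℝ) ≤ U.card * (n * P / 100) := by
    have a1 : (eBetween G U (Finset.univ \ U) : ℝ) ≤ ((∑ u ∈ U, G.degree u : ℕ) : ℝ) := by
      exact_mod_cast eBetween_le_deg G U _
    refine a1.trans ?_
    push_cast
    have := Finset.sum_le_card_nsmul U (fun u => (G.degree u : ℝ)) (n * P / 100) (by
      intro u hu
      have := hUD hu
      rw [hD, lowDegSet, Finset.mem_filter] at this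
      exact this.2.le)
    simpa using this
  have hUpos : (0 : ℝ) < U.card := by
    rw [hUc]
    nlinarith
  have hP : 0 ≤ P := by
    by_contra h
    nlinarith
  have h3 : (1 - ε / 10) * (U.card * (n / 2) * P) ≤ U.card * (n * P / 100) := by
    refine le_trans ?_ (h1.trans h2)
    have : 0 ≤ 1 - ε / 10 := by linarith
    gcongr
  have h4 : U.card * ((1 - ε / 10) / 2 * (n * P)) ≤ U.card * (1 / 100 * (n * P)) := by linarith
  have h5 := le_of_mul_le_mul_left h4 hUpos
  nlinarith

set_option maxHeartbeats 1000000 in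
lemma det {n : ℕ} {P ε β : ℝ} (hε : 0 < ε) (hε1 : ε ≤ 1 / 3) (hβ : 0 < β)
    (hβε : β ≤ ε / 1000) (hP : 0 ≤ P) (hd : 1 ≤ ε * (n * P) / 100) (hbn : 10 ≤ β * n)
    (hlog : Real.log n ≤ n * P) (hll : Real.log (Real.log n) ≤ β * ε / 8 * Real.log n)
    (G : SimpleGraph (Fin n)) (hA : evA n P G) (hB : evB n P G) (hC : evC n P β G)
    (hL : evL n P β (ε / 10) G) (hM : evM n P β (ε / 10) G)
    (V1 : Finset (Fin n)) (hV1 : V1 = Finset.univ \ lowDegSet n (n * P / 100) G)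
    (H1 : SimpleGraph (V1 : Set (Fin n)))
    (hdeg : ∀ v, (H1.degree v : ℝ) ≤ (1 / 3 - ε) * (G.degree (v : Fin n) : ℝ)) :
    QuasiRandom (G.induce (V1 : Set (Fin n)) \ H1) V1.card ((n : ℝ) * P) β := by
  have hd0 : 0 < n * P := by
    by_contra h
    nlinarith
  have hDs := lowDeg_small hε1 hβ hβε hd0 hbn G hL
  have hn0 : (0 : ℝ) < n := by
    by_contra h
    nlinarith
  have hn1 : (V1.card : ℝ) = n - (lowDegSet n (n * P / 100) G).card := by
    have h4 : (lowDegSet n (n * P / 100) G).card ≤ n := by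
      simpa using Finset.card_le_univ (lowDegSet n (n * P / 100) G)
    rw [hV1, Finset.card_sdiff_of_subset (Finset.subset_univ _), Finset.card_univ,
      Fintype.card_fin, Nat.cast_sub h4]
  have hn1l : (1 - β) * n ≤ (V1.card : ℝ) := by rw [hn1]; linarith
  have hn1u : (V1.card : ℝ) ≤ n := by
    rw [hn1]
    have : (0 : ℝ) ≤ (lowDegSet n (n * P / 100) G).card := Nat.cast_nonneg _
    linarith
  have hβ1 : β ≤ 1 / 3000 := by linarith
  have hnbig : (30000 : ℝ) ≤ n := by nlinarith
  have hn1big : (3 : ℝ) ≤ V1.card := by nlinarith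
  have hlogle : Real.log V1.card ≤ Real.log n := Real.log_le_log (by linarith) hn1u
  have hlog1 : 1 ≤ Real.log V1.card := by
    rw [Real.le_log_iff_exp_le (by linarith)]
    have := Real.exp_one_lt_d9
    linarith
  have hsub : (G.induce (V1 : Set (Fin n)) \ H1) ≤ G.induce (V1 : Set (Fin n)) := sdiff_le
  refine ⟨?_, ?_, ?_, ?_⟩
  · intro v
    have h1 := degree_induce G (V1 : Set (Fin n)) H1 v
    have h2 : ∀ F : Finset (Fin n), (∀ x ∈ F, G.Adj v x ∧ x ∉ V1) → F.card ≤ 1 := by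
      intro F hF
      rw [Finset.card_le_one]
      intro a ha b hb
      by_contra hab
      have key : ∀ x : Fin n, x ∉ V1 → (G.degree x : ℝ) < n * P / 100 := by
        intro x hx
        rw [hV1] at hx
        simpa [lowDegSet] using hx
      exact hA v a b hab (hF a ha).1 (hF b hb).1 (key a (hF a ha).2) (key b (hF b hb).2)
    have h3 := hdeg v
    have h4 : (n : ℝ) * P / 100 ≤ G.degree (v : Fin n) := by
      have key : ∀ x : Fin n, x ∈ V1 → (n : ℝ) * P / 100 ≤ G.degree x := by
        intro x hx
        rw [hV1] at hx
        simpa [lowDegSet] using hx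
      exact key v v.2
    have h5 : (G.degree (v : Fin n) : ℝ) ≤
        ((G.induce (V1 : Set (Fin n)) \ H1).degree v : ℝ) + H1.degree v + 1 := by
      have h6 := h1.trans (Nat.add_le_add_left (h2 _ (fun x hx => by simpa using hx)) _)
      exact_mod_cast h6
    have h7 := mul_le_mul_of_nonneg_left h4 (show 0 ≤ 2 / 3 + ε by linarith)
    have h8 : (n : ℝ) * P / 150 ≤ ((G.induce (V1 : Set (Fin n)) \ H1).degree v : ℝ) := by linarith
    convert h8
  · intro U hU
    have h1 := eIn_induce G _ _ hsub U
    have h2 := hB (U.map (Function.Embedding.subtype _)) (by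
      rw [Finset.card_map]
      refine hU.trans_le ?_
      have : (0 : ℝ) ≤ V1.card := Nat.cast_nonneg _
      gcongr)
    rw [Finset.card_map] at h2
    refine le_trans ?_ h2
    exact_mod_cast h1
  · intro U hU
    have h1 := eIn_induce G _ _ hsub U
    have h2 := hC (U.map (Function.Embedding.subtype _)) (by
      rw [Finset.card_map]
      refine hU.trans_le ?_
      gcongr)
    rw [Finset.card_map] at h2
    refine le_trans ?_ h2
    exact_mod_cast h1
  · intro U Z hUZ hUc hZc
    set U' := U.map (Function.Embedding.subtype (· ∈ (V1 : Set (Fin n)))) with hU'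
    set Z' := Z.map (Function.Embedding.subtype (· ∈ (V1 : Set (Fin n)))) with hZ'
    have hU'c : U'.card = U.card := Finset.card_map _
    have hZ'c : Z'.card = Z.card := Finset.card_map _
    have hdisj : Disjoint U' Z' := (Finset.disjoint_map _).2 hUZ
    have ha1 : (U.card : ℝ) ≤ β * V1.card := by
      rw [hUc]
      exact Nat.floor_le (by positivity)
    have ha2 : β * V1.card < (U.card : ℝ) + 1 := by
      rw [hUc]
      exact Nat.lt_floor_add_one _
    have hb2 : (1 / 3 - 27 * β) * V1.card < (Z.card : ℝ) + 1 := by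
      rw [hZc]
      exact Nat.lt_floor_add_one _
    have q1 : β * n ≤ 1 / 3000 * n := mul_le_mul_of_nonneg_right hβ1 hn0.le
    have q2 : β * (β * n) ≤ 1 / 3000 * (β * n) :=
      mul_le_mul_of_nonneg_right hβ1 (mul_pos hβ hn0).le
    have q3 : 0 < β * (β * n) := mul_pos hβ (mul_pos hβ hn0)
    have ha3 : β / 2 * n ≤ U.card := by
      have := mul_le_mul_of_nonneg_left hn1l hβ.le
      linarith
    have hb3 : n * (1 / 3 - 29 * β) ≤ Z.card := by
      have := mul_le_mul_of_nonneg_left hn1l (show 0 ≤ 1 / 3 - 27 * β by linarith)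
      linarith
    have hb4 : (n : ℝ) / 4 ≤ Z.card := by linarith
    have ha4 : (U.card : ℝ) ≤ β * n := ha1.trans (by gcongr)
    have hWc : ((Finset.univ \ U').card : ℝ) = n - U.card := by
      have h4 : U'.card ≤ n := by simpa using Finset.card_le_univ U'
      rw [Finset.card_sdiff_of_subset (Finset.subset_univ _), Finset.card_univ, Fintype.card_fin,
        Nat.cast_sub h4, hU'c]
    have e1 := hL U' Z' hdisj (by rw [hU'c]; exact ha3) (by rw [hZ'c]; exact hb4)
    have e2 := hM U' (Finset.univ \ U') Finset.disjoint_sdiff (by rw [hU'c]; exact ha3)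
      (by rw [hWc]; linarith)
    have e3 := hC U' (by rw [hU'c]; linarith)
    have e4 : (eBetween G U' Z' : ℝ) ≤
        (eBetween (G.induce (V1 : Set (Fin n)) \ H1) U Z : ℝ) + eBetween H1 U Z := by
      exact_mod_cast (eBetween_induce G _ U Z).trans (eBetween_diff _ H1 U Z)
    have e5 : (eBetween H1 U Z : ℝ) ≤
        (1 / 3 - ε) * (2 * eIn G U' + eBetween G U' (Finset.univ \ U')) := by
      have f1 : (eBetween H1 U Z : ℝ) ≤ ((∑ u ∈ U, H1.degree u : ℕ) : ℝ) := by
        exact_mod_cast eBetween_le_deg H1 U Z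
      have f2 : ((∑ u ∈ U', G.degree u : ℕ) : ℝ) ≤
          2 * eIn G U' + eBetween G U' (Finset.univ \ U') := by
        exact_mod_cast deg_sum G U'
      refine f1.trans (le_trans ?_ (mul_le_mul_of_nonneg_left f2 (by linarith)))
      push_cast
      rw [hU', Finset.sum_map, Finset.mul_sum]
      exact Finset.sum_le_sum fun u _ => hdeg u
    rw [hU'c, hZ'c] at e1
    rw [hU'c] at e2 e3
    rw [hWc] at e2
    have ha0 : (0 : ℝ) ≤ U.card := Nat.cast_nonneg _
    set a : ℝ := (U.card : ℝ) with ha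
    set b : ℝ := (Z.card : ℝ) with hb
    have hδ : 0 ≤ 1 - ε / 10 := by linarith
    have g1 : (1 - ε / 10) * (a * (n * (1 / 3 - 29 * β)) * P) ≤ eBetween G U' Z' := by
      refine le_trans ?_ e1
      gcongr
    have g2 : (eBetween G U' (Finset.univ \ U') : ℝ) ≤ (1 + ε / 10) * (a * n * P) := by
      refine e2.trans ?_
      gcongr
      linarith
    have g3 : (eBetween H1 U Z : ℝ) ≤ (1 / 3 - ε) *
        (2 * (50 * β * (n * P) * a) + (1 + ε / 10) * (a * n * P)) := by
      refine e5.trans (mul_le_mul_of_nonneg_left ?_ (by linarith))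
      linarith
    have g4 : a * (n * P) * (ε / 4) ≤ (eBetween (G.induce (V1 : Set (Fin n)) \ H1) U Z : ℝ) := by
      have c1 : ε / 4 ≤ (1 - ε / 10) * (1 / 3 - 29 * β) - (1 / 3 - ε) * (100 * β + 1 + ε / 10) := by
        nlinarith [mul_pos hε hβ, mul_pos hε hε]
      have c2 := mul_le_mul_of_nonneg_left c1 (mul_nonneg ha0 hd0.le)
      linarith
    refine le_trans ?_ g4
    have g5 : Real.log (Real.log V1.card) ≤ Real.log (Real.log n) :=
      Real.log_le_log (by linarith) hlogle
    have g6 : 0 ≤ Real.log (Real.log V1.card) := Real.log_nonneg hlog1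
    calc (V1.card : ℝ) * Real.log (Real.log V1.card) ≤ n * (β * ε / 8 * (n * P)) := by
          refine mul_le_mul hn1u (g5.trans (hll.trans ?_)) g6 hn0.le
          gcongr
      _ = (β / 2 * n) * (n * P) * (ε / 4) := by ring
      _ ≤ a * (n * P) * (ε / 4) := by gcongr

lemma whp_of (p : ℕ → ℝ) (hp0 : ∀ n, 0 ≤ p n) (hp1 : ∀ n, p n ≤ 1)
    (A : ∀ n : ℕ, SimpleGraph (Fin n) → Prop)
    (E1 E2 E3 E4 E5 : ∀ n : ℕ, SimpleGraph (Fin n) → Prop)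
    (h1 : Tendsto (fun n => gnpProb n (p n) (fun G => ¬ E1 n G)) atTop (nhds 0))
    (h2 : Tendsto (fun n => gnpProb n (p n) (fun G => ¬ E2 n G)) atTop (nhds 0))
    (h3 : Tendsto (fun n => gnpProb n (p n) (fun G => ¬ E3 n G)) atTop (nhds 0))
    (h4 : Tendsto (fun n => gnpProb n (p n) (fun G => ¬ E4 n G)) atTop (nhds 0))
    (h5 : Tendsto (fun n => gnpProb n (p n) (fun G => ¬ E5 n G)) atTop (nhds 0))
    (h : ∀ᶠ n in atTop, ∀ G, E1 n G → E2 n G → E3 n G → E4 n G → E5 n G → A n G) :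
    WHP p A := by
  unfold WHP
  have hs := ((((h1.add h2).add h3).add h4).add h5).const_sub 1
  simp only [add_zero, sub_zero] at hs
  refine tendsto_of_tendsto_of_tendsto_of_le_of_le' hs tendsto_const_nhds ?_
    (Eventually.of_forall fun n => gnpProb_le_one (hp0 n) (hp1 n) _)
  filter_upwards [h] with n hn
  rw [gnpProb_not (A n)]
  refine sub_le_sub_left ?_ 1
  refine (gnpProb_mono (hp0 n) (hp1 n) (B := fun G =>
    (((¬ E1 n G ∨ ¬ E2 n G) ∨ ¬ E3 n G) ∨ ¬ E4 n G) ∨ ¬ E5 n G) ?_).trans ?_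
  · intro G hG
    by_contra hc
    push Not at hc
    exact hG (hn G hc.1.1.1.1 hc.1.1.1.2 hc.1.1.2 hc.1.2 hc.2)
  · refine (gnpProb_or (hp0 n) (hp1 n) _ _).trans (add_le_add_left ?_ _)
    refine (gnpProb_or (hp0 n) (hp1 n) _ _).trans (add_le_add_left ?_ _)
    refine (gnpProb_or (hp0 n) (hp1 n) _ _).trans (add_le_add_left ?_ _)
    exact gnpProb_or (hp0 n) (hp1 n) _ _

/-- Lemma 4.5: for every `ε > 0` there is `β₀ > 0` such that for `0 < β ≤ β₀` and
`p ≥ ln n / n`, w.h.p.: for every spanning subgraph `H₁` of `G₁ = G[V ∖ D_t(G)]`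
(`t = np/100`) with `d_{H₁}(v) ≤ (1/3 - ε) d_G(v)` for all `v`, the graph `G₁ - H₁`
is `(n₁, np, β)`-quasi-random. -/
theorem stmt11 (ε : ℝ) (hε : 0 < ε) :
    ∃ β0 : ℝ, 0 < β0 ∧ ∀ β : ℝ, 0 < β → β ≤ β0 →
      ∀ p : ℕ → ℝ, (∀ n, 0 ≤ p n) → (∀ n, p n ≤ 1) → (∀ n : ℕ, Real.log n / n ≤ p n) →
      WHP p (fun n G =>
        ∀ H1 : SimpleGraph ((Finset.univ \ lowDegSet n (n * p n / 100) G : Finset (Fin n)) :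
            Set (Fin n)),
          H1 ≤ G.induce ((Finset.univ \ lowDegSet n (n * p n / 100) G : Finset (Fin n)) :
            Set (Fin n)) →
          (∀ v, (H1.degree v : ℝ) ≤ (1 / 3 - ε) * (G.degree ↑v : ℝ)) →
          QuasiRandom
            (G.induce ((Finset.univ \ lowDegSet n (n * p n / 100) G : Finset (Fin n)) :
              Set (Fin n)) \ H1)
            (Finset.univ \ lowDegSet n (n * p n / 100) G).card ((n : ℝ) * p n) β) := by
  set ε' := min ε (1 / 3) with hε'
  have hε'0 : 0 < ε' := lt_min hε (by norm_num)
  have hε'1 : ε' ≤ 1 / 3 := min_le_right _ _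
  refine ⟨ε' / 1000, by positivity, ?_⟩
  intro β hβ hβ0 p hp0 hp1 hp
  refine whp_of p hp0 hp1 _ (fun n G => evA n (p n) G) (fun n G => evB n (p n) G)
    (fun n G => evC n (p n) β G) (fun n G => evL n (p n) β (ε' / 10) G)
    (fun n G => evM n (p n) β (ε' / 10) G)
    (tendsto_A p hp0 hp1 hp) (tendsto_B p hp0 hp1 hp) (tendsto_C p hp0 hp1 hp β hβ)
    (tendsto_L p hp0 hp1 hp β (ε' / 10) hβ (by positivity) (by linarith))
    (tendsto_M p hp0 hp1 hp β (ε' / 10) hβ (by positivity) (by linarith)) ?_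
  have l1 : ∀ᶠ n : ℕ in atTop, 100 / ε' ≤ n * p n := (tendsto_np p hp).eventually_ge_atTop _
  have l2 : ∀ᶠ n : ℕ in atTop, 10 ≤ β * n :=
    (tendsto_natCast_atTop_atTop.const_mul_atTop hβ).eventually_ge_atTop 10
  have l3 : ∀ᶠ n : ℕ in atTop, Real.log (Real.log n) ≤ β * ε' / 8 * Real.log n := by
    have h := Real.isLittleO_log_id_atTop.bound (show (0 : ℝ) < β * ε' / 8 by positivity)
    filter_upwards [tendsto_logn.eventually h, tendsto_logn.eventually_ge_atTop 0] with n hn hn2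
    rw [Real.norm_eq_abs, Real.norm_eq_abs, id, abs_of_nonneg hn2] at hn
    exact (le_abs_self _).trans hn
  filter_upwards [l1, l2, l3, ev_log p hp] with n a1 a2 a3 a4 G hA hB hC hL hM H1 _ hdeg
  refine det hε'0 hε'1 hβ hβ0 (hp0 n) ?_ a2 a4 a3 G hA hB hC hL hM _ rfl H1 ?_
  · rw [div_le_iff₀ hε'0] at a1
    linarith
  · intro v
    refine (hdeg v).trans (mul_le_mul_of_nonneg_right ?_ (Nat.cast_nonneg _))
    have := min_le_left ε (1 / 3)
    linarith
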